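/- arXiv:2306.10810 — 5 statements merged into one kernel-verified Lean document; each statement's English description precedes it below -/
import Mathlib

section
/- The convex hull of the set T̃(·,·,l',u',L,U) of nonnegative rank-at-most-one m×n matrices with column sums in [l'_j,u'_j] and overall sum in [L,U] equals the set of m×n real matrices X with nonnegative entries for which there exists a nonnegative vector t' ∈ ℝ^m with Σ_{i=1}^m t'_i = 1 such that l'_j t'_i ≤ x_{ij} ≤ u'_j t'_i for all i, j, and L t'_i ≤ Σ_{j=1}^n x_{ij} ≤ U t'_i for all i. -/
/-!
A nonnegative matrix of rank at most one with column sums `c` can be written `Y i j = t i * c j`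
with `t` in the standard simplex: `t i` is the `i`-th row sum divided by the total, and any point
of the simplex works when the total is zero. The bounds on the column sums and on the total then
become the bounds of the extended formulation, scaled by `t i`. Since the extended formulation
describes a convex set, it contains the convex hull (`convexHull_min`).

Conversely, if `(X, t')` satisfies the extended formulation, then `X` is the convex combination,
with weights `t' i`, of the matrices supported on the single row `i`, where they equal
`X i / t' i`. Such a matrix has rank at most one, and its column sums and total are within bounds.
Rows with `t' i = 0` vanish because `0 ≤ X i j ≤ u' j * t' i`, so they can be left out.
-/

/-- In a real matrix of rank at most one all columns are multiples of one vector. -/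
lemma exists_eq_mul_of_rank_le_one {m n : ℕ} (Y : Matrix (Fin m) (Fin n) ℝ) (h : Y.rank ≤ 1) :
    ∃ (a : Fin m → ℝ) (b : Fin n → ℝ), ∀ i j, Y i j = a i * b j := by
  rw [Matrix.rank, finrank_le_one_iff] at h
  obtain ⟨v, hv⟩ := h
  have hcol : ∀ j, ∃ c : ℝ, ∀ i, Y i j = (v : Fin m → ℝ) i * c := by
    intro j
    obtain ⟨c, hc⟩ := hv ⟨Y.mulVecLin (Pi.single j 1), LinearMap.mem_range_self _ _⟩
    refine ⟨c, fun i => ?_⟩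
    have := congrFun (congrArg Subtype.val hc) i
    simp at this
    linarith
  choose b hb using hcol
  exact ⟨v, b, fun i j => hb j i⟩

/-- A nonnegative matrix of rank at most one is the outer product of a point of the standard
simplex and its vector of column sums. -/
lemma exists_simplex_mul_colSum {m n : ℕ} (hm : 0 < m) (Y : Matrix (Fin m) (Fin n) ℝ)
    (h0 : ∀ i j, 0 ≤ Y i j) (h : Y.rank ≤ 1) :
    ∃ t : Fin m → ℝ, (∀ i, 0 ≤ t i) ∧ ∑ i, t i = 1 ∧ ∀ i j, Y i j = t i * ∑ k, Y k j := by
  obtain ⟨a, b, hab⟩ := exists_eq_mul_of_rank_le_one Y h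
  have hrow : ∀ i, 0 ≤ ∑ j, Y i j := fun i => Finset.sum_nonneg fun j _ => h0 i j
  by_cases hS : ∑ i, ∑ j, Y i j = 0
  · have hz : ∀ i j, Y i j = 0 := by
      intro i j
      have h1 := (Finset.sum_eq_zero_iff_of_nonneg fun i _ => hrow i).1 hS i (Finset.mem_univ _)
      exact (Finset.sum_eq_zero_iff_of_nonneg fun j _ => h0 i j).1 h1 j (Finset.mem_univ _)
    refine ⟨Pi.single ⟨0, hm⟩ 1, fun i => ?_, by simp, fun i j => by simp [hz]⟩
    by_cases hi : i = ⟨0, hm⟩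
    · subst hi; simp
    · simp [hi]
  · refine ⟨fun i => (∑ j, Y i j) / ∑ i, ∑ j, Y i j, fun i => ?_, ?_, fun i j => ?_⟩
    · exact div_nonneg (hrow i) (Finset.sum_nonneg fun i _ => hrow i)
    · rw [← Finset.sum_div, div_self hS]
    · rw [div_mul_eq_mul_div, eq_div_iff hS]
      simp only [hab, ← Finset.mul_sum, ← Finset.sum_mul]
      ring

theorem convexHull_columnwise_extended_formulation
    (m n : ℕ) (hm : 0 < m) (hn : 0 < n)
    (l' u' : Fin n → ℝ) (L U : ℝ)
    (hl' : ∀ j, 0 ≤ l' j) (hlu' : ∀ j, l' j ≤ u' j) (hu' : ∀ j, 0 < u' j)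
    (hL : 0 ≤ L) (hLU : L ≤ U) :
    convexHull ℝ
      {Y : Matrix (Fin m) (Fin n) ℝ |
        (∀ i j, 0 ≤ Y i j) ∧ Y.rank ≤ 1 ∧
        (∀ j, l' j ≤ ∑ i, Y i j ∧ ∑ i, Y i j ≤ u' j) ∧
        (L ≤ ∑ i, ∑ j, Y i j ∧ ∑ i, ∑ j, Y i j ≤ U)} =
    {X : Matrix (Fin m) (Fin n) ℝ |
      (∀ i j, 0 ≤ X i j) ∧
      ∃ t' : Fin m → ℝ, (∀ i, 0 ≤ t' i) ∧ (∑ i, t' i = 1) ∧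
        (∀ i j, l' j * t' i ≤ X i j ∧ X i j ≤ u' j * t' i) ∧
        (∀ i, L * t' i ≤ ∑ j, X i j ∧ ∑ j, X i j ≤ U * t' i)} := by
  apply Set.Subset.antisymm
  · apply convexHull_min
    · rintro Y ⟨h0, hr, hc, hS⟩
      obtain ⟨t, ht0, ht1, ht⟩ := exists_simplex_mul_colSum hm Y h0 hr
      refine ⟨h0, t, ht0, ht1, fun i j => ?_, fun i => ?_⟩
      · rw [ht i j, mul_comm (t i)]
        exact ⟨mul_le_mul_of_nonneg_right (hc j).1 (ht0 i),
          mul_le_mul_of_nonneg_right (hc j).2 (ht0 i)⟩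
      · have : ∑ j, Y i j = (∑ i, ∑ j, Y i j) * t i := by
          have hcomm : ∑ i, ∑ j, Y i j = ∑ j, ∑ i, Y i j := Finset.sum_comm
          rw [hcomm, mul_comm, Finset.mul_sum]
          exact Finset.sum_congr rfl fun j _ => ht i j
        rw [this]
        exact ⟨mul_le_mul_of_nonneg_right hS.1 (ht0 i),
          mul_le_mul_of_nonneg_right hS.2 (ht0 i)⟩
    · rintro X ⟨hX, t, ht0, ht1, hb, hs⟩ Z ⟨hZ, s, hs0, hs1, hb', hs'⟩ p q hp hq hpq
      refine ⟨fun i j => ?_, fun i => p * t i + q * s i, fun i => ?_, ?_,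
        fun i j => ?_, fun i => ?_⟩
      · have := mul_nonneg hp (hX i j)
        have := mul_nonneg hq (hZ i j)
        simp only [Matrix.add_apply, Matrix.smul_apply, smul_eq_mul]
        linarith
      · have := mul_nonneg hp (ht0 i)
        have := mul_nonneg hq (hs0 i)
        linarith
      · rw [Finset.sum_add_distrib, ← Finset.mul_sum, ← Finset.mul_sum, ht1, hs1]
        linarith
      · have h1 := mul_le_mul_of_nonneg_left (hb i j).1 hp
        have h2 := mul_le_mul_of_nonneg_left (hb i j).2 hp
        have h3 := mul_le_mul_of_nonneg_left (hb' i j).1 hq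
        have h4 := mul_le_mul_of_nonneg_left (hb' i j).2 hq
        simp only [Matrix.add_apply, Matrix.smul_apply, smul_eq_mul]
        constructor <;> linarith
      · have h1 := mul_le_mul_of_nonneg_left (hs i).1 hp
        have h2 := mul_le_mul_of_nonneg_left (hs i).2 hp
        have h3 := mul_le_mul_of_nonneg_left (hs' i).1 hq
        have h4 := mul_le_mul_of_nonneg_left (hs' i).2 hq
        simp only [Matrix.add_apply, Matrix.smul_apply, smul_eq_mul, Finset.sum_add_distrib,
          ← Finset.mul_sum]
        constructor <;> linarith
  · rintro X ⟨hX, t, ht0, ht1, hb, hs⟩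
    have hX0 : ∀ i j, t i = 0 → X i j = 0 := by
      intro i j hi
      have := (hb i j).2
      rw [hi, mul_zero] at this
      exact le_antisymm this (hX i j)
    have hsum : X = ∑ i ∈ Finset.univ.filter (fun i => t i ≠ 0),
        t i • Matrix.vecMulVec (Pi.single i 1) (fun j => X i j / t i) := by
      ext k j
      rw [Matrix.sum_apply]
      by_cases hk : t k = 0
      · rw [hX0 k j hk, Finset.sum_eq_zero]
        intro i hi
        have hik : k ≠ i := by
          rintro rfl
          exact (Finset.mem_filter.1 hi).2 hk
        simp [Matrix.vecMulVec_apply, hik]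
      · rw [Finset.sum_eq_single k]
        · simp [Matrix.vecMulVec_apply]
          field_simp
        · intro i _ hik
          simp [Matrix.vecMulVec_apply, hik.symm]
        · intro h
          simp [hk] at h
    rw [hsum]
    apply (convex_convexHull ℝ _).sum_mem
    · exact fun i _ => ht0 i
    · rw [Finset.sum_filter_ne_zero, ht1]
    · intro i hi
      have hpos : 0 < t i := lt_of_le_of_ne (ht0 i) (Ne.symm (Finset.mem_filter.1 hi).2)
      apply subset_convexHull
      have hcol : ∀ j, ∑ k, Matrix.vecMulVec (Pi.single i (1 : ℝ)) (fun j => X i j / t i) k j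
          = X i j / t i := by
        intro j
        simp [Matrix.vecMulVec_apply, ← Finset.sum_mul]
      refine ⟨fun k j => ?_, Matrix.rank_vecMulVec_le _ _, fun j => ?_, ?_⟩
      · rw [Matrix.vecMulVec_apply]
        refine mul_nonneg ?_ (div_nonneg (hX i j) hpos.le)
        by_cases hk : k = i
        · subst hk; simp
        · simp [hk]
      · rw [hcol j, le_div_iff₀ hpos, div_le_iff₀ hpos]
        exact hb i j
      · have htot : ∑ k, ∑ j, Matrix.vecMulVec (Pi.single i (1 : ℝ)) (fun j => X i j / t i) k j
            = (∑ j, X i j) / t i := by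
          rw [Finset.sum_div]
          exact Finset.sum_comm.trans (Finset.sum_congr rfl fun j _ => hcol j)
        rw [htot, le_div_iff₀ hpos, div_le_iff₀ hpos]
        exact hs i
end

section
/- An m×n real matrix X belongs to T̃(l,u,l',u',L,U) if and only if X has nonnegative entries, rank(X) ≤ 1, and there exists an m×n real matrix R with nonnegative entries such that Σ_{i=1}^m Σ_{j=1}^n r_{ij} = 1 and for all i, j: l_i Σ_{i'=1}^m r_{i'j} ≤ x_{ij} ≤ u_i Σ_{i'=1}^m r_{i'j}, l'_j Σ_{j'=1}^n r_{ij'} ≤ x_{ij} ≤ u'_j Σ_{j'=1}^n r_{ij'}, L r_{ij} ≤ x_{ij} ≤ U r_{ij}, and x_{ij} = r_{ij} · Σ_{i'=1}^m Σ_{j'=1}^n x_{i'j'}. -/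
/-!
If `X` has rank at most one, then `X i j * s = (row sum i) * (column sum j)`, where `s` is the sum of
all entries. When `s ≠ 0`, the normalised matrix `R = X / s` has column sums `(column sum j) / s`, so
multiplying the row bounds by the column sums of `R` gives exactly the bounds `l i * _ ≤ X i j ≤ u i * _`,
and symmetrically for columns. When `s = 0`, `X = 0` and all lower bounds vanish, so the uniform
matrix serves as `R`. The converse is obtained by summing the entrywise bounds over
`j`, over `i`, or over both, using that the entries of `R` sum to one.
-/

lemma exists_outer_of_rank_le_one {m n : ℕ} (X : Matrix (Fin m) (Fin n) ℝ) (h : X.rank ≤ 1) :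
    ∃ (a : Fin m → ℝ) (b : Fin n → ℝ), ∀ i j, X i j = a i * b j := by
  rw [Matrix.rank_eq_finrank_span_cols] at h
  obtain ⟨v, hv⟩ := finrank_le_one_iff.mp h
  choose b hb using fun j => hv ⟨X.col j, Submodule.subset_span ⟨j, rfl⟩⟩
  refine ⟨v, b, fun i j => ?_⟩
  have := congrFun (congrArg Subtype.val (hb j)) i
  simp only [Submodule.coe_smul, Pi.smul_apply, smul_eq_mul, Matrix.col_apply] at this
  rw [← this, mul_comm]

lemma mul_total_eq_of_rank_le_one {m n : ℕ} (X : Matrix (Fin m) (Fin n) ℝ) (h : X.rank ≤ 1)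
    (i : Fin m) (j : Fin n) :
    X i j * ∑ i', ∑ j', X i' j' = (∑ j', X i j') * ∑ i', X i' j := by
  obtain ⟨a, b, hab⟩ := exists_outer_of_rank_le_one X h
  simp only [hab, ← Finset.mul_sum, ← Finset.sum_mul]
  ring

theorem Ttilde_eq_Ttilde2
    (m n : ℕ) (hm : 0 < m) (hn : 0 < n)
    (l u : Fin m → ℝ) (l' u' : Fin n → ℝ) (L U : ℝ)
    (hl : ∀ i, 0 ≤ l i) (hlu : ∀ i, l i ≤ u i)
    (hl' : ∀ j, 0 ≤ l' j) (hlu' : ∀ j, l' j ≤ u' j)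
    (hL : 0 ≤ L) (hLU : L ≤ U)
    (X : Matrix (Fin m) (Fin n) ℝ) :
    ((∀ i j, 0 ≤ X i j) ∧
     (∀ i, l i ≤ ∑ j, X i j ∧ ∑ j, X i j ≤ u i) ∧
     (∀ j, l' j ≤ ∑ i, X i j ∧ ∑ i, X i j ≤ u' j) ∧
     (L ≤ ∑ i, ∑ j, X i j ∧ ∑ i, ∑ j, X i j ≤ U) ∧
     X.rank ≤ 1)
    ↔
    ((∀ i j, 0 ≤ X i j) ∧ X.rank ≤ 1 ∧
     ∃ R : Matrix (Fin m) (Fin n) ℝ,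
       (∀ i j, 0 ≤ R i j) ∧
       (∑ i, ∑ j, R i j = 1) ∧
       (∀ i j, l i * ∑ i', R i' j ≤ X i j ∧ X i j ≤ u i * ∑ i', R i' j) ∧
       (∀ i j, l' j * ∑ j', R i j' ≤ X i j ∧ X i j ≤ u' j * ∑ j', R i j') ∧
       (∀ i j, L * R i j ≤ X i j ∧ X i j ≤ U * R i j) ∧
       (∀ i j, X i j = R i j * ∑ i', ∑ j', X i' j')) := by
  constructor
  · rintro ⟨hX, hrow, hcol, ⟨hLs, hsU⟩, hrank⟩
    refine ⟨hX, hrank, ?_⟩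
    have key := mul_total_eq_of_rank_le_one X hrank
    have hs0 : 0 ≤ ∑ i, ∑ j, X i j :=
      Finset.sum_nonneg fun i _ => Finset.sum_nonneg fun j _ => hX i j
    rcases hs0.eq_or_lt with hs | hs
    · have hX0 : ∀ i j, X i j = 0 := by
        intro i j
        have h1 := (Finset.sum_eq_zero_iff_of_nonneg
          fun i _ => Finset.sum_nonneg fun j _ => hX i j).1 hs.symm i (Finset.mem_univ i)
        exact (Finset.sum_eq_zero_iff_of_nonneg fun j _ => hX i j).1 h1 j (Finset.mem_univ j)
      simp only [hX0, Finset.sum_const_zero] at hrow hcol hLs hsU ⊢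
      have hl0 : ∀ i, l i = 0 := fun i => le_antisymm (hrow i).1 (hl i)
      have hl0' : ∀ j, l' j = 0 := fun j => le_antisymm (hcol j).1 (hl' j)
      have hL0 : L = 0 := le_antisymm hLs hL
      have hm' : (m : ℝ) ≠ 0 := by positivity
      have hn' : (n : ℝ) ≠ 0 := by positivity
      have hR : (0 : ℝ) ≤ ((m : ℝ) * n)⁻¹ := by positivity
      refine ⟨fun _ _ => ((m : ℝ) * n)⁻¹, fun _ _ => hR, ?_, fun i j => ⟨?_, ?_⟩,
        fun i j => ⟨?_, ?_⟩, fun i j => ⟨?_, ?_⟩, fun i j => ?_⟩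
      · simp only [Finset.sum_const, Finset.card_univ, Fintype.card_fin, nsmul_eq_mul]
        field_simp
      · simp [hl0]
      · exact mul_nonneg (hrow i).2 (Finset.sum_nonneg fun _ _ => hR)
      · simp [hl0']
      · exact mul_nonneg (hcol j).2 (Finset.sum_nonneg fun _ _ => hR)
      · simp [hL0]
      · exact mul_nonneg hsU hR
      · simp
    · set s := ∑ i, ∑ j, X i j with hsdef
      have hc : ∀ j, 0 ≤ ∑ i, X i j := fun j => Finset.sum_nonneg fun i _ => hX i j
      have hr : ∀ i, 0 ≤ ∑ j, X i j := fun i => Finset.sum_nonneg fun j _ => hX i j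
      refine ⟨fun i j => X i j / s, fun i j => div_nonneg (hX i j) hs.le, ?_,
        fun i j => ?_, fun i j => ?_, fun i j => ?_, fun i j => ?_⟩
      · simp only [← Finset.sum_div]
        exact div_self hs.ne'
      · rw [← Finset.sum_div, ← mul_div_assoc, ← mul_div_assoc, div_le_iff₀ hs, le_div_iff₀ hs, key]
        exact ⟨mul_le_mul_of_nonneg_right (hrow i).1 (hc j),
          mul_le_mul_of_nonneg_right (hrow i).2 (hc j)⟩
      · rw [← Finset.sum_div, ← mul_div_assoc, ← mul_div_assoc, div_le_iff₀ hs, le_div_iff₀ hs, key,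
          mul_comm (∑ j', X i j')]
        exact ⟨mul_le_mul_of_nonneg_right (hcol j).1 (hr i),
          mul_le_mul_of_nonneg_right (hcol j).2 (hr i)⟩
      · rw [← mul_div_assoc, ← mul_div_assoc, div_le_iff₀ hs, le_div_iff₀ hs, mul_comm (X i j)]
        exact ⟨mul_le_mul_of_nonneg_right hLs (hX i j), mul_le_mul_of_nonneg_right hsU (hX i j)⟩
      · exact (div_mul_cancel₀ _ hs.ne').symm
  · rintro ⟨hX, hrank, R, _, hR1, hrow, hcol, htot, _⟩
    have hR1' : ∑ j, ∑ i, R i j = 1 := by rw [Finset.sum_comm, hR1]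
    refine ⟨hX, fun i => ⟨?_, ?_⟩, fun j => ⟨?_, ?_⟩, ⟨?_, ?_⟩, hrank⟩
    · have := Finset.sum_le_sum fun j (_ : j ∈ Finset.univ) => (hrow i j).1
      rwa [← Finset.mul_sum, hR1', mul_one] at this
    · have := Finset.sum_le_sum fun j (_ : j ∈ Finset.univ) => (hrow i j).2
      rwa [← Finset.mul_sum, hR1', mul_one] at this
    · have := Finset.sum_le_sum fun i (_ : i ∈ Finset.univ) => (hcol i j).1
      rwa [← Finset.mul_sum, hR1, mul_one] at this
    · have := Finset.sum_le_sum fun i (_ : i ∈ Finset.univ) => (hcol i j).2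
      rwa [← Finset.mul_sum, hR1, mul_one] at this
    · have := Finset.sum_le_sum fun i (_ : i ∈ Finset.univ) =>
        Finset.sum_le_sum fun j (_ : j ∈ Finset.univ) => (htot i j).1
      simp only [← Finset.mul_sum] at this
      rwa [hR1, mul_one] at this
    · have := Finset.sum_le_sum fun i (_ : i ∈ Finset.univ) =>
        Finset.sum_le_sum fun j (_ : j ∈ Finset.univ) => (htot i j).2
      simp only [← Finset.mul_sum] at this
      rwa [hR1, mul_one] at this
end

section
/- Every matrix X ∈ T̃(l,u,l',u',L,U) satisfies, for all indices i, j, the second-order-cone-type valid inequality l_i u_i · (Σ_{i'=1}^m x_{i'j})² + l'_j u'_j · (Σ_{j'=1}^n x_{ij'})² ≤ (l_i l'_j + u_i u'_j) · x_{ij} · Σ_{i'=1}^m Σ_{j'=1}^n x_{i'j'}. -/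
/-!
Write `r` for the `i`-th row sum, `c` for the `j`-th column sum and `S` for the total sum.
Rank at most one makes every `2 × 2` minor vanish; summing the minors through `(i, j)` gives
`r * c = X i j * S`. After this substitution, the difference of the two sides of the inequality is
`(u i * c - l' j * r) * (u' j * r - l i * c)`, and both factors are nonnegative because
`l i ≤ r ≤ u i` and `l' j ≤ c ≤ u' j`.
-/

/-- Every `2 × 2` minor of a matrix of rank at most one vanishes. -/
lemma minor_eq_of_rank_le_one {m n : ℕ} (X : Matrix (Fin m) (Fin n) ℝ) (h : X.rank ≤ 1)
    (i k : Fin m) (j q : Fin n) : X i q * X k j = X i j * X k q := by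
  by_contra hne
  have hdet : (X.submatrix ![i, k] ![j, q]).det ≠ 0 := by
    rw [Matrix.det_fin_two]
    simp only [Matrix.submatrix_apply, Matrix.cons_val_zero, Matrix.cons_val_one]
    exact sub_ne_zero.mpr (Ne.symm hne)
  have h2 := Matrix.rank_of_det_ne_zero hdet
  have h3 := X.rank_submatrix_le ![i, k] ![j, q]
  simp only [Fintype.card_fin] at h2
  omega

theorem Ttilde_soc_valid_inequality
    (m n : ℕ) (hm : 0 < m) (hn : 0 < n)
    (l u : Fin m → ℝ) (l' u' : Fin n → ℝ) (L U : ℝ)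
    (hl : ∀ i, 0 ≤ l i) (hlu : ∀ i, l i ≤ u i)
    (hl' : ∀ j, 0 ≤ l' j) (hlu' : ∀ j, l' j ≤ u' j)
    (hL : 0 ≤ L) (hLU : L ≤ U)
    (X : Matrix (Fin m) (Fin n) ℝ)
    (hX : (∀ i j, 0 ≤ X i j) ∧
      (∀ i, l i ≤ ∑ j, X i j ∧ ∑ j, X i j ≤ u i) ∧
      (∀ j, l' j ≤ ∑ i, X i j ∧ ∑ i, X i j ≤ u' j) ∧
      (L ≤ ∑ i, ∑ j, X i j ∧ ∑ i, ∑ j, X i j ≤ U) ∧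
      X.rank ≤ 1) :
    ∀ i j,
      l i * u i * (∑ i', X i' j) ^ 2 + l' j * u' j * (∑ j', X i j') ^ 2
        ≤ (l i * l' j + u i * u' j) * X i j * ∑ i', ∑ j', X i' j' := by
  obtain ⟨hnn, hr, hc, -, hrank⟩ := hX
  intro i j
  have key : (∑ j', X i j') * (∑ i', X i' j) = X i j * ∑ i', ∑ j', X i' j' := by
    rw [Finset.sum_mul_sum, Finset.sum_comm, Finset.mul_sum]
    refine Finset.sum_congr rfl fun k _ => ?_
    rw [Finset.mul_sum]
    exact Finset.sum_congr rfl fun q _ => minor_eq_of_rank_le_one X hrank i k j q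
  obtain ⟨hr1, hr2⟩ := hr i
  obtain ⟨hc1, hc2⟩ := hc j
  rw [mul_assoc (l i * l' j + u i * u' j), ← key]
  have hr0 := (hl i).trans hr1
  have hc0 := (hl' j).trans hc1
  have h1 : l' j * ∑ j', X i j' ≤ (∑ i', X i' j) * u i := mul_le_mul hc1 hr2 hr0 hc0
  have h2 : l i * ∑ i', X i' j ≤ (∑ j', X i j') * u' j := mul_le_mul hr1 hc2 hc0 hr0
  linarith [mul_nonneg (sub_nonneg.mpr h1) (sub_nonneg.mpr h2)]
end

section
/- Assume additionally that U > 0. Then every matrix X ∈ T̃(l,u,l',u',L,U) satisfies, for all indices i, j, the valid inequality l_i · (Σ_{i'=1}^m x_{i'j})² ≤ [ (l_i l'_j/U) · Σ_{i'=1}^m x_{i'j} − (l'_j u'_j/U) · Σ_{j'=1}^n x_{ij'} + u'_j · x_{ij} ] · Σ_{i'=1}^m Σ_{j'=1}^n x_{i'j'}. -/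
/-!
Write `r` for the sum of row `i`, `c` for the sum of column `j`, `S` for the sum of all entries and
`x` for the entry at `(i, j)`. Rank at most one gives `x * S = r * c`, so the difference of the
two sides of the inequality is `(u' r - l c) * (c - l' S / U)`. Both factors are nonnegative:
`l ≤ r` and `c ≤ u'` for the first, `l' ≤ c` and `S ≤ U` for the second.
-/

/-- The `2 × 2` minors of a matrix of rank at most one vanish. -/
lemma mul_eq_mul_of_rank_le_one {m n : ℕ} (X : Matrix (Fin m) (Fin n) ℝ) (h : X.rank ≤ 1)
    (i i' : Fin m) (j j' : Fin n) : X i j * X i' j' = X i j' * X i' j := by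
  rw [Matrix.rank_eq_finrank_span_cols, Submodule.finrank_le_one_iff_isPrincipal] at h
  obtain ⟨v, hv⟩ := (Submodule.isPrincipal_iff _).1 h
  have key : ∀ k, ∃ a : ℝ, a • v = X.col k := fun k => by
    rw [← Submodule.mem_span_singleton, ← hv]
    exact Submodule.subset_span ⟨k, rfl⟩
  obtain ⟨a, ha⟩ := key j
  obtain ⟨b, hb⟩ := key j'
  have ea : ∀ k, X k j = a * v k := fun k => (congrFun ha k).symm
  have eb : ∀ k, X k j' = b * v k := fun k => (congrFun hb k).symm
  rw [ea, ea, eb, eb]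
  ring

theorem Ttilde_soc_valid_inequality_second_family
    (m n : ℕ) (hm : 0 < m) (hn : 0 < n)
    (l u : Fin m → ℝ) (l' u' : Fin n → ℝ) (L U : ℝ)
    (hl : ∀ i, 0 ≤ l i) (hlu : ∀ i, l i ≤ u i)
    (hl' : ∀ j, 0 ≤ l' j) (hlu' : ∀ j, l' j ≤ u' j)
    (hL : 0 ≤ L) (hLU : L ≤ U) (hUpos : 0 < U)
    (X : Matrix (Fin m) (Fin n) ℝ)
    (hX : (∀ i j, 0 ≤ X i j) ∧
      (∀ i, l i ≤ ∑ j, X i j ∧ ∑ j, X i j ≤ u i) ∧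
      (∀ j, l' j ≤ ∑ i, X i j ∧ ∑ i, X i j ≤ u' j) ∧
      (L ≤ ∑ i, ∑ j, X i j ∧ ∑ i, ∑ j, X i j ≤ U) ∧
      X.rank ≤ 1) :
    ∀ i j,
      l i * (∑ i', X i' j) ^ 2
        ≤ ((l i * l' j / U) * (∑ i', X i' j)
            - (l' j * u' j / U) * (∑ j', X i j')
            + u' j * X i j) * ∑ i', ∑ j', X i' j' := by
  intro i j
  obtain ⟨hX0, hrow, hcol, ⟨-, hSU⟩, hrank⟩ := hX
  have hxS : X i j * ∑ i', ∑ j', X i' j' = (∑ j', X i j') * ∑ i', X i' j := by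
    rw [Finset.mul_sum, Finset.mul_sum]
    refine Finset.sum_congr rfl fun i' _ => ?_
    rw [Finset.mul_sum, Finset.sum_mul]
    exact Finset.sum_congr rfl fun j' _ => mul_eq_mul_of_rank_le_one X hrank i i' j j'
  have hr := (hrow i).1
  have hc := hcol j
  generalize (∑ i', ∑ j', X i' j') = S at *
  generalize (∑ j', X i j') = r at *
  generalize (∑ i', X i' j) = c at *
  have h1 : 0 ≤ u' j * r - l i * c := by
    have := mul_le_mul hr hc.2 ((hl' j).trans hc.1) ((hl i).trans hr)
    linarith
  have h2 : 0 ≤ c - l' j * (S / U) := by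
    have := mul_le_of_le_one_right (hl' j) ((div_le_one hUpos).2 hSU)
    linarith [hc.1]
  have h3 : (l i * l' j / U * c - l' j * u' j / U * r + u' j * X i j) * S - l i * c ^ 2
      = (u' j * r - l i * c) * (c - l' j * (S / U)) := by
    linear_combination u' j * hxS
  linarith [mul_nonneg h1 h2]
end

section
/- Assume additionally that L > 0. Then every matrix X ∈ T̃(l,u,l',u',L,U) satisfies, for all indices i, j, the linear valid inequality u_i · [ (u'_j/L + l'_j/U) · Σ_{i'=1}^m x_{i'j} − (u'_j l'_j/(U·L)) · Σ_{i'=1}^m Σ_{j'=1}^n x_{i'j'} ] ≥ (u_i l'_j/U) · Σ_{i'=1}^m x_{i'j} − (l'_j²/U) · Σ_{j'=1}^n x_{ij'} + l'_j · x_{ij}. -/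
/-!
Write `r`, `c`, `s` for the sum of row `i`, the sum of column `j` and the total sum. Rank at most
one gives `X i j * s = r * c`, so `X i j = r * c / s`. After substituting this, the difference of
the two sides of the inequality factors as
`(u i * u' j / L - l' j * r / s) * (c - l' j * s / U)`.
The first factor is nonnegative because `r ≤ u i`, `l' j ≤ u' j` and `L ≤ s`, the second because
`l' j ≤ c` and `s ≤ U`.
-/

/-- In a matrix of rank at most one, every entry times the total sum is the product of its row sum
and its column sum. -/
lemma entry_mul_total_of_rank_le_one {m n : ℕ} (X : Matrix (Fin m) (Fin n) ℝ) (h : X.rank ≤ 1)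
    (i : Fin m) (j : Fin n) :
    X i j * (∑ i', ∑ j', X i' j') = (∑ j', X i j') * (∑ i', X i' j) := by
  rw [Matrix.rank_eq_finrank_span_cols, finrank_le_one_iff] at h
  obtain ⟨⟨v, hv⟩, hspan⟩ := h
  have hcol : ∀ k, ∃ a : ℝ, ∀ i', X i' k = a * v i' := by
    intro k
    obtain ⟨a, ha⟩ := hspan ⟨X.col k, Submodule.subset_span ⟨k, rfl⟩⟩
    refine ⟨a, fun i' => ?_⟩
    have := congrFun (congrArg Subtype.val ha) i'
    simpa using this.symm
  choose w hw using hcol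
  simp only [hw, ← Finset.mul_sum, ← Finset.sum_mul]
  ring

theorem Ttilde_linear_valid_inequality_reverse_convex
    (m n : ℕ) (hm : 0 < m) (hn : 0 < n)
    (l u : Fin m → ℝ) (l' u' : Fin n → ℝ) (L U : ℝ)
    (hl : ∀ i, 0 ≤ l i) (hlu : ∀ i, l i ≤ u i)
    (hl' : ∀ j, 0 ≤ l' j) (hlu' : ∀ j, l' j ≤ u' j)
    (hL : 0 ≤ L) (hLU : L ≤ U) (hLpos : 0 < L)
    (X : Matrix (Fin m) (Fin n) ℝ)
    (hX : (∀ i j, 0 ≤ X i j) ∧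
      (∀ i, l i ≤ ∑ j, X i j ∧ ∑ j, X i j ≤ u i) ∧
      (∀ j, l' j ≤ ∑ i, X i j ∧ ∑ i, X i j ≤ u' j) ∧
      (L ≤ ∑ i, ∑ j, X i j ∧ ∑ i, ∑ j, X i j ≤ U) ∧
      X.rank ≤ 1) :
    ∀ i j,
      u i * ((u' j / L + l' j / U) * (∑ i', X i' j)
          - (u' j * l' j / (U * L)) * (∑ i', ∑ j', X i' j'))
        ≥ (u i * l' j / U) * (∑ i', X i' j)
          - (l' j ^ 2 / U) * (∑ j', X i j')
          + l' j * X i j := by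
  obtain ⟨_, hr, hc, ⟨hLs, hsU⟩, hrank⟩ := hX
  intro i j
  have key := entry_mul_total_of_rank_le_one X hrank i j
  have hr0 := (hl i).trans (hr i).1
  have hru := (hr i).2
  have hca := (hc j).1
  have ha := hl' j
  have hab := hlu' j
  generalize (∑ i', ∑ j', X i' j') = s at *
  generalize (∑ j', X i j') = r at *
  generalize (∑ i', X i' j) = c at *
  generalize X i j = x at *
  generalize u i = p at *
  generalize u' j = b at *
  generalize l' j = a at *
  have hs : 0 < s := hLpos.trans_le hLs
  have hU : 0 < U := hLpos.trans_le hLU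
  have hx : x = r * c / s := by rw [eq_div_iff hs.ne', key]
  have h1 : 0 ≤ p * b / L - a * r / s := by
    rw [sub_nonneg]
    apply div_le_div₀ (mul_nonneg (hr0.trans hru) (ha.trans hab)) _ hLpos hLs
    rw [mul_comm a r]
    exact mul_le_mul hru hab ha (hr0.trans hru)
  have h2 : 0 ≤ c - a * s / U := by
    rw [sub_nonneg, div_le_iff₀ hU]
    exact mul_le_mul hca hsU hs.le (ha.trans hca)
  have h3 := mul_nonneg h1 h2
  subst hx
  rw [ge_iff_le, ← sub_nonneg]
  refine h3.trans_eq ?_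
  field_simp
  ring
end
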